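/- arXiv:2509.10361 — 9 statements merged into one kernel-verified Lean document; each statement's English description precedes it below -/
import Mathlib

section
/- Let (G, w) be a finite undirected simple graph with edge weights w : E(G) → ℕ, let D, C ⊆ V(G) and k ∈ ℕ. Let H = (V_H, E_H) be a submultigraph of G that is Eulerian, satisfies C ⊆ V_H, has at most k connected components, and in which every vertex of C lies in a connected component containing a vertex of D. Then there exists a submultigraph H' = (V_H, E'_H) with E'_H ≤ E_H as multisets, such that every edge has multiplicity at most 2 in E'_H, H' is Eulerian, C ⊆ V_H, H' has at most k connected components, every vertex of C lies in a component of H' containing a vertex of D, and w(H') ≤ w(H). -/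
/-! Deleting two parallel copies of an edge changes every degree by an even amount, and if the edge
has multiplicity at least three, a copy of it survives, so reachability does not change. Repeating
this until all multiplicities are at most two (`exists_reduced`) gives a multiset of edges with the
same support and the same degree parities. Components depend only on the support
(`mreach_congr`), and the weight can only drop when edges are removed. -/

/-- `(VH, EH)` is a submultigraph of `G`: every edge of the multiset `EH` is an
edge of `G`, and all of its endpoints lie in `VH`. -/
def IsSubmultigraph {V : Type*} (G : SimpleGraph V) (VH : Set V)
    (EH : Multiset (Sym2 V)) : Prop :=
  ∀ e ∈ EH, e ∈ G.edgeSet ∧ ∀ v ∈ e, v ∈ VH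

/-- Degree of `v` in the edge multiset `EH` (counted with multiplicity). -/
def mdeg {V : Type*} [DecidableEq V] (v : V) (EH : Multiset (Sym2 V)) : ℕ :=
  Multiset.countP (fun e => v ∈ e) EH

/-- Reachability along edges of `EH`. -/
def MReach {V : Type*} (EH : Multiset (Sym2 V)) (u v : V) : Prop :=
  Relation.ReflTransGen (fun a b => s(a, b) ∈ EH) u v

/-- The submultigraph with vertex set `VH` and edge multiset `EH` has at most
`k` connected components: some set of at most `k` vertices of `VH` meets every
connected component. -/
def AtMostComponents {V : Type*} (VH : Set V) (EH : Multiset (Sym2 V)) (k : ℕ) : Prop :=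
  ∃ S : Finset V, S.card ≤ k ∧ ↑S ⊆ VH ∧ ∀ v ∈ VH, ∃ u ∈ S, MReach EH u v

/-- Every finite multiset of edges contains one with multiplicities at most two, the same support
and the same degree parities. -/
lemma exists_reduced {V : Type*} [DecidableEq V] (EH : Multiset (Sym2 V)) :
    ∃ EH' : Multiset (Sym2 V), EH' ≤ EH ∧ (∀ e, EH'.count e ≤ 2) ∧
      (∀ e, e ∈ EH' ↔ e ∈ EH) ∧ ∀ v, Even (mdeg v EH') ↔ Even (mdeg v EH) := by
  induction EH using Multiset.strongInductionOn with
  | ih EH ih =>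
    by_cases h : ∀ e, EH.count e ≤ 2
    · exact ⟨EH, le_rfl, h, fun _ => Iff.rfl, fun _ => Iff.rfl⟩
    · push Not at h
      obtain ⟨e, he⟩ := h
      obtain ⟨T, rfl⟩ : ∃ T, EH = T + Multiset.replicate 2 e := by
        obtain ⟨T, hT⟩ := Multiset.le_iff_exists_add.1 (Multiset.le_count_iff_replicate_le.1 he.le)
        exact ⟨T, hT.trans (add_comm _ _)⟩
      -- One of the at least three copies of `e` remains in `T`.
      have heT : e ∈ T := by
        rw [Multiset.count_add, Multiset.count_replicate_self] at he
        exact Multiset.count_pos.1 (by omega)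
      obtain ⟨E', hle, hcount, hmem, hdeg⟩ :=
        ih T (lt_of_le_of_ne (Multiset.le_add_right _ _) fun h => by
          have := congrArg Multiset.card h
          simp only [Multiset.card_add, Multiset.card_replicate] at this
          omega)
      refine ⟨E', hle.trans (Multiset.le_add_right _ _), hcount, fun a => ?_, fun v => ?_⟩
      · rw [hmem, Multiset.mem_add]
        refine ⟨Or.inl, fun ha => ha.elim id fun ha => ?_⟩
        rwa [Multiset.eq_of_mem_replicate ha]
      · have h2 : Even (Multiset.countP (fun a => v ∈ a) (Multiset.replicate 2 e)) := by
          rw [Multiset.replicate_add 1 1 e, Multiset.countP_add]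
          exact Even.add_self _
        rw [hdeg, mdeg, mdeg, Multiset.countP_add, Nat.even_add]
        exact (iff_true_right h2).symm

lemma mreach_congr {V : Type*} {E E' : Multiset (Sym2 V)} (h : ∀ e, e ∈ E' ↔ e ∈ E) (u v : V) :
    MReach E' u v ↔ MReach E u v := by
  simp only [MReach, h]

theorem stmt1 {V : Type*} [Fintype V] [DecidableEq V]
    (G : SimpleGraph V) (w : Sym2 V → ℕ) (D C : Set V) (k : ℕ)
    (VH : Set V) (EH : Multiset (Sym2 V))
    (hsub : IsSubmultigraph G VH EH)
    (heul : ∀ v ∈ VH, Even (mdeg v EH))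
    (hC : C ⊆ VH)
    (hcomp : AtMostComponents VH EH k)
    (hdep : ∀ c ∈ C, ∃ d ∈ D, MReach EH d c) :
    ∃ EH' : Multiset (Sym2 V), EH' ≤ EH ∧
      (∀ e : Sym2 V, EH'.count e ≤ 2) ∧
      IsSubmultigraph G VH EH' ∧
      (∀ v ∈ VH, Even (mdeg v EH')) ∧
      C ⊆ VH ∧
      AtMostComponents VH EH' k ∧
      (∀ c ∈ C, ∃ d ∈ D, MReach EH' d c) ∧
      (EH'.map w).sum ≤ (EH.map w).sum := by
  obtain ⟨EH', hle, hcount, hmem, hdeg⟩ := exists_reduced EH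
  refine ⟨EH', hle, hcount, fun e he => hsub e ((hmem e).1 he),
    fun v hv => (hdeg v).2 (heul v hv), hC, ?_, ?_, ?_⟩
  · simpa only [AtMostComponents, mreach_congr hmem] using hcomp
  · simpa only [mreach_congr hmem] using hdep
  · obtain ⟨T, rfl⟩ := Multiset.le_iff_exists_add.1 hle
    simp
end

section
/- Let (G, w) be a finite undirected simple graph with edge weights w : E(G) → ℕ, let D, C ⊆ V(G), k ∈ ℕ, r ∈ ℕ, and let κ : E(G) → ℕ be edge capacities. Then the following are equivalent: (i) there exist k' ≤ k closed walks p₁, …, p_{k'} in G, each starting at a vertex of D, such that every vertex of C lies on at least one walk, each edge e ∈ E(G) is traversed at most κ(e) times in total by the walks (counted with multiplicity over all walks), and the total weight Σᵢ w(pᵢ) equals r; (ii) there exists a submultigraph H = (V_H, E_H) of G in which every edge e has multiplicity at most κ(e), H is Eulerian, C ⊆ V_H, H has at most k connected components, every connected component of H contains a vertex of D, and w(H) = r. -/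
lemma MReach.symm {V : Type*} {E : Multiset (Sym2 V)} {a b : V} (h : MReach E a b) :
    MReach E b a := by
  have hs : Std.Symm (fun a b : V => s(a, b) ∈ E) := ⟨fun a b h => by rwa [Sym2.eq_swap]⟩
  exact Std.Symm.symm (r := Relation.ReflTransGen (fun a b : V => s(a, b) ∈ E)) _ _ h

lemma mdeg_add {V : Type*} [DecidableEq V] (x : V) (A B : Multiset (Sym2 V)) :
    mdeg x (A + B) = mdeg x A + mdeg x B := Multiset.countP_add _ _ _

/-- The parity of the number of edge ends of a walk at a vertex; the trail version in Mathlib does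
not cover repeated edges. -/
lemma even_mdeg_walk {V : Type*} [DecidableEq V] {G : SimpleGraph V} {u v : V}
    (p : G.Walk u v) (x : V) :
    Even (mdeg x (p.edges : Multiset (Sym2 V))) ↔ (x = u ↔ x = v) := by
  induction p with
  | nil => simp [mdeg]
  | @cons a b c h p ih =>
    have hab := h.ne
    have : mdeg x ((SimpleGraph.Walk.cons h p).edges : Multiset (Sym2 V))
        = mdeg x (p.edges : Multiset (Sym2 V)) + if x = a ∨ x = b then 1 else 0 := by
      simp [mdeg, List.countP_cons]
    rw [this]
    split_ifs with hx
    · rw [Nat.even_add_one, ih]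
      rcases hx with rfl | rfl
      · simp [hab]
      · simp [hab.symm]
    · push Not at hx
      simp [ih, hx.1, hx.2]

lemma mreach_of_mem_support {V : Type*} {G : SimpleGraph V} {E : Multiset (Sym2 V)} {u v : V}
    (p : G.Walk u v) (hp : ∀ e ∈ p.edges, e ∈ E) : ∀ x ∈ p.support, MReach E u x := by
  induction p with
  | nil => intro x hx; simp at hx; subst hx; exact .refl
  | @cons a b c h p ih =>
    intro x hx
    rw [SimpleGraph.Walk.support_cons, List.mem_cons] at hx
    rcases hx with rfl | hx
    · exact .refl
    · exact Relation.ReflTransGen.head (hp _ (by simp)) (ih (fun e he => hp e (by simp [he])) x hx)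

/-- In an even multigraph, a walk `q` with unused edges `R` extends to a closed walk. -/
lemma exists_closed_walk_extending {V : Type*} [DecidableEq V] {G : SimpleGraph V}
    (E : Multiset (Sym2 V)) (hE : ∀ e ∈ E, e ∈ G.edgeSet) (hev : ∀ x, Even (mdeg x E))
    {u : V} (n : ℕ) : ∀ {v : V} (q : G.Walk u v) (R : Multiset (Sym2 V)),
      (q.edges : Multiset (Sym2 V)) + R = E → R.card ≤ n →
      ∃ q' : G.Walk u u, (q'.edges : Multiset (Sym2 V)) ≤ E ∧ q.length ≤ q'.length := by
  induction n with
  | zero =>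
    intro v q R h hn
    have hR : R = 0 := by simpa using hn
    subst hR
    have := (even_mdeg_walk q v).1 (by simpa [← h] using hev v)
    obtain rfl : v = u := this.2 rfl
    exact ⟨q, by simp [← h], le_rfl⟩
  | succ n ih =>
    intro v q R h hn
    by_cases huv : v = u
    · subst huv
      exact ⟨q, by simp [← h], le_rfl⟩
    · have h1 : ¬ Even (mdeg v (q.edges : Multiset (Sym2 V))) := by
        rw [even_mdeg_walk]; simp [huv]
      have h2 := hev v
      rw [← h, mdeg_add, Nat.even_add] at h2
      have h3 : 0 < mdeg v R := by
        rcases Nat.eq_zero_or_pos (mdeg v R) with h0 | h0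
        · simp [h0] at h2; exact absurd h2 h1
        · exact h0
      obtain ⟨e, heR, hve⟩ := Multiset.countP_pos.1 h3
      obtain ⟨y, rfl⟩ := Sym2.mem_iff_exists.1 hve
      obtain ⟨R', rfl⟩ := Multiset.exists_cons_of_mem heR
      have hadj : G.Adj v y := hE s(v, y) (by rw [← h]; simp)
      obtain ⟨q', hq', hl⟩ := ih (q.concat hadj) R' (by
        rw [← h, SimpleGraph.Walk.edges_concat, List.concat_eq_append, ← Multiset.coe_add,
          Multiset.coe_singleton, add_assoc, Multiset.singleton_add]) (by simpa using hn)
      exact ⟨q', hq', by simp at hl; omega⟩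

/-- Hierholzer's theorem for the component of `d` in an even multigraph. -/
lemma exists_closed_walk_component {V : Type*} [DecidableEq V] {G : SimpleGraph V}
    (E : Multiset (Sym2 V)) (hE : ∀ e ∈ E, e ∈ G.edgeSet) (hev : ∀ x, Even (mdeg x E)) (d : V) :
    ∃ p : G.Walk d d, (p.edges : Multiset (Sym2 V)) ≤ E ∧
      (∀ e ∈ E, ∀ x ∈ e, x ∈ p.support → p.edges.count e = E.count e) ∧
      ∀ x, MReach E d x → x ∈ p.support := by
  classical
  -- A longest closed walk within `E`, whose length is at most `E.card`.
  obtain ⟨p, hpE, hmax⟩ : ∃ p : G.Walk d d, (p.edges : Multiset (Sym2 V)) ≤ E ∧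
      ∀ q : G.Walk d d, (q.edges : Multiset (Sym2 V)) ≤ E → q.length ≤ p.length := by
    let P : ℕ → Prop := fun n => ∃ p : G.Walk d d, (p.edges : Multiset (Sym2 V)) ≤ E ∧ p.length = n
    have hb : ∀ q : G.Walk d d, (q.edges : Multiset (Sym2 V)) ≤ E → q.length ≤ E.card := by
      intro q hq
      simpa using Multiset.card_le_card hq
    have h0 : P 0 := ⟨.nil, by simp, rfl⟩
    obtain ⟨p, hp, hl⟩ := Nat.findGreatest_spec (P := P) (Nat.zero_le E.card) h0
    exact ⟨p, hp, fun q hq => hl ▸ Nat.le_findGreatest (hb q hq) ⟨q, hq, rfl⟩⟩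
  have hfull : ∀ e ∈ E, ∀ x ∈ e, x ∈ p.support → p.edges.count e = E.count e := by
    intro e he x hxe hx
    by_contra hne
    obtain ⟨R, hR⟩ := Multiset.le_iff_exists_add.1 hpE
    have hRev : ∀ y, Even (mdeg y R) := by
      intro y
      have h1 := hev y
      rw [hR, mdeg_add, Nat.even_add, even_mdeg_walk] at h1
      exact h1.1 Iff.rfl
    have heR : e ∈ R := by
      by_contra h
      apply hne
      rw [hR, Multiset.count_add, Multiset.count_eq_zero_of_notMem h, Multiset.coe_count, add_zero]
    obtain ⟨y, rfl⟩ := Sym2.mem_iff_exists.1 hxe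
    obtain ⟨R', hR'⟩ := Multiset.exists_cons_of_mem heR
    have hadj : G.Adj x y := hE _ he
    obtain ⟨q, hq, hl⟩ := exists_closed_walk_extending R
      (fun e he => hE e (by rw [hR]; exact Multiset.mem_add.2 (.inr he))) hRev R'.card
      (SimpleGraph.Walk.cons hadj .nil) R' (by
        simp [hR', ← Multiset.singleton_add]) le_rfl
    have hspec := congrArg SimpleGraph.Walk.edges (p.take_spec hx)
    have hlen := congrArg SimpleGraph.Walk.length (p.take_spec hx)
    rw [SimpleGraph.Walk.edges_append] at hspec
    rw [SimpleGraph.Walk.length_append] at hlen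
    have := hmax ((p.takeUntil x hx).append (q.append (p.dropUntil x hx))) (by
      rw [hR, ← hspec]
      simp only [SimpleGraph.Walk.edges_append, ← Multiset.coe_add]
      rw [add_left_comm, add_comm]
      exact add_le_add_right hq _)
    simp only [SimpleGraph.Walk.length_append, SimpleGraph.Walk.length_cons,
      SimpleGraph.Walk.length_nil] at this hl
    omega
  refine ⟨p, hpE, hfull, fun x hx => ?_⟩
  induction hx with
  | refl => simp
  | @tail b c _ hbc ih =>
    have h1 := hfull _ hbc b (by simp) ih
    have h2 : s(b, c) ∈ p.edges := by
      rw [← List.count_pos_iff, h1]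
      exact Multiset.count_pos.2 hbc
    exact p.snd_mem_support_of_mem_edges h2

theorem stmt2 {V : Type*} [Fintype V] [DecidableEq V]
    (G : SimpleGraph V) (w : Sym2 V → ℕ) (D C : Set V) (k r : ℕ)
    (κ : Sym2 V → ℕ) :
    (∃ k' ≤ k, ∃ (start : Fin k' → V) (p : (i : Fin k') → G.Walk (start i) (start i)),
      (∀ i, start i ∈ D) ∧
      (∀ c ∈ C, ∃ i, c ∈ (p i).support) ∧
      (∀ e ∈ G.edgeSet, (∑ i, (p i).edges.count e) ≤ κ e) ∧
      (∑ i, ((p i).edges.map w).sum) = r)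
    ↔
    (∃ (VH : Set V) (EH : Multiset (Sym2 V)),
      IsSubmultigraph G VH EH ∧
      (∀ e : Sym2 V, EH.count e ≤ κ e) ∧
      (∀ v ∈ VH, Even (mdeg v EH)) ∧
      C ⊆ VH ∧
      AtMostComponents VH EH k ∧
      (∀ v ∈ VH, ∃ d ∈ D, MReach EH d v) ∧
      (EH.map w).sum = r) := by
  classical
  have hweight : ∀ {k' : ℕ} (L : Fin k' → List (Sym2 V)),
      ((∑ i, (L i : Multiset (Sym2 V))).map w).sum = ∑ i, ((L i).map w).sum := by
    intro k' L
    exact map_sum (Multiset.sumAddMonoidHom.comp (Multiset.mapAddMonoidHom w))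
      (fun i => (L i : Multiset (Sym2 V))) Finset.univ
  constructor
  · rintro ⟨k', hk, start, p, hD, hC, hκ, hw⟩
    have hmem : ∀ e, e ∈ ∑ i, ((p i).edges : Multiset (Sym2 V)) ↔ ∃ i, e ∈ (p i).edges := by
      intro e; simp [Multiset.mem_sum]
    have hreach : ∀ i, ∀ x ∈ (p i).support,
        MReach (∑ i, ((p i).edges : Multiset (Sym2 V))) (start i) x :=
      fun i => mreach_of_mem_support (p i) (fun e he => (hmem e).2 ⟨i, he⟩)
    have hG : ∀ e ∈ ∑ i, ((p i).edges : Multiset (Sym2 V)), e ∈ G.edgeSet := by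
      intro e he
      obtain ⟨i, hi⟩ := (hmem e).1 he
      exact (p i).edges_subset_edgeSet hi
    refine ⟨{v | ∃ i, v ∈ (p i).support}, ∑ i, ((p i).edges : Multiset (Sym2 V)),
      ?_, ?_, ?_, hC, ?_, ?_, ?_⟩
    · intro e he
      refine ⟨hG e he, fun v hv => ?_⟩
      obtain ⟨i, hi⟩ := (hmem e).1 he
      obtain ⟨y, rfl⟩ := Sym2.mem_iff_exists.1 hv
      exact ⟨i, (p i).fst_mem_support_of_mem_edges hi⟩
    · intro e
      by_cases he : e ∈ G.edgeSet
      · simpa [Multiset.count_sum'] using hκ e he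
      · rw [Multiset.count_eq_zero_of_notMem (fun h => he (hG e h))]
        exact Nat.zero_le _
    · intro v _
      have : mdeg v (∑ i, ((p i).edges : Multiset (Sym2 V)))
          = ∑ i, mdeg v ((p i).edges : Multiset (Sym2 V)) :=
        map_sum (Multiset.countPAddMonoidHom (fun e : Sym2 V => v ∈ e)) _ _
      rw [this]
      exact Finset.even_sum _ fun i _ => (even_mdeg_walk _ _).2 Iff.rfl
    · refine ⟨Finset.univ.image start, ?_, ?_, ?_⟩
      · exact (Finset.card_image_le.trans (by simp)).trans hk
      · intro x hx
        obtain ⟨i, _, rfl⟩ := Finset.mem_image.1 (Finset.mem_coe.1 hx)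
        exact ⟨i, by simp⟩
      · rintro v ⟨i, hi⟩
        exact ⟨start i, by simp, hreach i v hi⟩
    · rintro v ⟨i, hi⟩
      exact ⟨start i, hD i, hreach i v hi⟩
    · rw [hweight, hw]
  · rintro ⟨VH, EH, hsub, hκ, hev, hC, ⟨S, hSk, hSV, hS⟩, hD, hw⟩
    -- Vertices outside `VH` have degree zero.
    have hev' : ∀ x, Even (mdeg x EH) := by
      intro x
      by_cases hx : x ∈ VH
      · exact hev x hx
      · have : mdeg x EH = 0 :=
          Multiset.countP_eq_zero.2 fun e he hxe => hx ((hsub e he).2 x hxe)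
        simp [this]
    let st : Setoid V := ⟨MReach EH, fun _ => .refl, MReach.symm, Relation.ReflTransGen.trans⟩
    -- One depot `g q` for each component `q` of the submultigraph.
    have hg : ∀ q : Quotient st, ∃ d, (∃ v ∈ VH, Quotient.mk st v = q) →
        d ∈ D ∧ Quotient.mk st d = q := by
      intro q
      by_cases hq : ∃ v ∈ VH, Quotient.mk st v = q
      · obtain ⟨v, hv, rfl⟩ := hq
        obtain ⟨d, hd, hr⟩ := hD v hv
        exact ⟨d, fun _ => ⟨hd, Quotient.sound hr⟩⟩
      · exact ⟨q.out, fun h => absurd h hq⟩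
    choose g hg using hg
    let T : Finset V := S.image fun v => g (Quotient.mk st v)
    let start : Fin T.card → V := fun i => (T.equivFin.symm i : V)
    have hinj : Function.Injective start :=
      Subtype.val_injective.comp T.equivFin.symm.injective
    have hstart : ∀ i, start i ∈ D ∧ g (Quotient.mk st (start i)) = start i := by
      intro i
      obtain ⟨v, hv, hvi⟩ := Finset.mem_image.1 (T.equivFin.symm i).2
      have h := hg _ ⟨v, hSV hv, rfl⟩
      change g (Quotient.mk st v) = start i at hvi
      rw [hvi] at h
      exact ⟨h.1, by rw [h.2, hvi]⟩
    have hcover : ∀ v ∈ VH, ∃ i, MReach EH (start i) v := by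
      intro v hv
      obtain ⟨u, hu, huv⟩ := hS v hv
      refine ⟨T.equivFin ⟨g (Quotient.mk st u), Finset.mem_image_of_mem _ hu⟩, ?_⟩
      have h1 : MReach EH (g (Quotient.mk st u)) u :=
        Quotient.exact (hg _ ⟨u, hSV hu, rfl⟩).2
      have h2 : MReach EH (g (Quotient.mk st u)) v := Relation.ReflTransGen.trans h1 huv
      simpa [start] using h2
    have huniq : ∀ i j v, MReach EH (start i) v → MReach EH (start j) v → i = j := by
      intro i j v hi hj
      apply hinj
      have h : Quotient.mk st (start i) = Quotient.mk st (start j) :=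
        Quotient.sound (hi.trans hj.symm)
      rw [← (hstart i).2, h, (hstart j).2]
    choose p hpE hfull hreach using fun i =>
      exists_closed_walk_component EH (fun e he => (hsub e he).1) hev' (start i)
    have hsum : ∑ i, ((p i).edges : Multiset (Sym2 V)) = EH := by
      ext e
      rw [Multiset.count_sum']
      simp only [Multiset.coe_count]
      by_cases he : e ∈ EH
      · obtain ⟨a, ha⟩ : ∃ a, a ∈ e := ⟨_, e.out_fst_mem⟩
        obtain ⟨i, hi⟩ := hcover a ((hsub e he).2 a ha)
        rw [Finset.sum_eq_single i, hfull i e he a ha (hreach i a hi)]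
        · intro j _ hji
          refine List.count_eq_zero.2 fun hej => hji (huniq j i a ?_ hi)
          obtain ⟨b, rfl⟩ := Sym2.mem_iff_exists.1 ha
          exact mreach_of_mem_support (p j)
            (fun e' he' => Multiset.mem_of_le (hpE j) (Multiset.mem_coe.2 he')) a
            ((p j).fst_mem_support_of_mem_edges hej)
        · simp
      · rw [Multiset.count_eq_zero_of_notMem he]
        refine Finset.sum_eq_zero fun i _ => List.count_eq_zero.2 fun h => he ?_
        exact Multiset.mem_of_le (hpE i) (Multiset.mem_coe.2 h)
    refine ⟨T.card, Finset.card_image_le.trans hSk, start, p, fun i => (hstart i).1, ?_, ?_, ?_⟩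
    · intro c hc
      obtain ⟨i, hi⟩ := hcover c (hC hc)
      exact ⟨i, hreach i c hi⟩
    · intro e _
      have := hκ e
      rw [← hsum, Multiset.count_sum'] at this
      simpa using this
    · rw [← hweight, hsum, hw]
end

section
/- Let (G, w) be a finite connected undirected simple graph with edge weights w : E(G) → ℕ, let D ⊆ V(G) be nonempty, let C ⊆ V(G) be finite and nonempty, and let k ≥ 1. Then the minimum weight of a VRP routing for (G, w, D, C, k) equals the minimum, taken over all partitions 𝒫 of C into at most k nonempty blocks, over all linear orderings (c₁, …, c_{ℓ_X}) of each block X ∈ 𝒫, and over all choices of a depot d_X ∈ D for each block X, of the quantity Σ_{X ∈ 𝒫} ( w(d_X ⇝ c₁) + Σ_{i=1}^{ℓ_X − 1} w(c_i ⇝ c_{i+1}) + w(c_{ℓ_X} ⇝ d_X) ). -/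
/-!
Both sides are infima of sets of natural numbers, so it suffices that every element of either set
dominates an element of the other.

* From ordered blocks with depots to routings: concatenating shortest walks along
  `d, c₁, …, c_ℓ, d` gives a closed walk of exactly the tour weight that visits the block
  (`exists_walk_chainWeight`).
* From routings to ordered blocks: assign every client to one walk visiting it, and order the
  clients assigned to a walk by their occurrence along it. The resulting tour is no heavier than the
  walk, because `wdist` satisfies the triangle inequality (`chainWeight_le_of_sublist`). Walks that
  receive no client are dropped.
-/


/-- Minimum weight of a walk from `u` to `v` in `G` under edge weights `w`. -/
noncomputable def wdist {V : Type*} (G : SimpleGraph V) (w : Sym2 V → ℕ) (u v : V) : ℕ :=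
  sInf {x | ∃ p : G.Walk u v, (p.edges.map w).sum = x}

/-- Sum of `f` over consecutive pairs of a list. -/
def chainWeight {V : Type*} (f : V → V → ℕ) : List V → ℕ
  | a :: b :: l => f a b + chainWeight f (b :: l)
  | _ => 0

theorem wdist_le {V : Type*} (G : SimpleGraph V) (w : Sym2 V → ℕ) {u v : V} (p : G.Walk u v) :
    wdist G w u v ≤ (p.edges.map w).sum :=
  Nat.sInf_le ⟨p, rfl⟩

theorem exists_walk_wdist {V : Type*} (G : SimpleGraph V) (hG : G.Connected) (w : Sym2 V → ℕ)
    (u v : V) : ∃ p : G.Walk u v, (p.edges.map w).sum = wdist G w u v := by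
  obtain ⟨p⟩ := hG.preconnected u v
  exact Nat.sInf_mem (s := {x | ∃ p : G.Walk u v, (p.edges.map w).sum = x}) ⟨_, p, rfl⟩

theorem wdist_self {V : Type*} (G : SimpleGraph V) (w : Sym2 V → ℕ) (u : V) :
    wdist G w u u = 0 := by
  simpa using wdist_le G w (SimpleGraph.Walk.nil : G.Walk u u)

theorem wdist_le_of_adj {V : Type*} (G : SimpleGraph V) (hG : G.Connected) (w : Sym2 V → ℕ)
    {u v : V} (h : G.Adj u v) (x : V) :
    wdist G w u x ≤ w s(u, v) + wdist G w v x := by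
  obtain ⟨p, hp⟩ := exists_walk_wdist G hG w v x
  simpa [hp] using wdist_le G w (SimpleGraph.Walk.cons h p)

/-- A tour through `l` from `u` to `v` is realised by concatenating shortest walks. -/
theorem exists_walk_chainWeight {V : Type*} (G : SimpleGraph V) (hG : G.Connected)
    (w : Sym2 V → ℕ) (v : V) (l : List V) (u : V) :
    ∃ p : G.Walk u v, (p.edges.map w).sum = chainWeight (wdist G w) (u :: (l ++ [v])) ∧
      ∀ x ∈ l, x ∈ p.support := by
  induction l generalizing u with
  | nil =>
    obtain ⟨p, hp⟩ := exists_walk_wdist G hG w u v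
    exact ⟨p, by simp [chainWeight, hp], by simp⟩
  | cons a l ih =>
    obtain ⟨p, hp⟩ := exists_walk_wdist G hG w u a
    obtain ⟨q, hq, hs⟩ := ih a
    refine ⟨p.append q, ?_, ?_⟩
    · simp [SimpleGraph.Walk.edges_append, chainWeight, hp, hq]
    · intro x hx
      rw [SimpleGraph.Walk.mem_support_append_iff]
      rcases List.mem_cons.1 hx with rfl | hx
      · exact Or.inr q.start_mem_support
      · exact Or.inr (hs x hx)

/-- Shortcutting a walk to a subsequence of its vertices does not increase its weight. -/
theorem chainWeight_le_of_sublist {V : Type*} (G : SimpleGraph V) (hG : G.Connected)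
    (w : Sym2 V → ℕ) {u v : V} (p : G.Walk u v) (l : List V) (hl : l.Sublist p.support) :
    chainWeight (wdist G w) (u :: (l ++ [v])) ≤ (p.edges.map w).sum := by
  induction p generalizing l with
  | nil =>
    rw [SimpleGraph.Walk.support_nil, List.sublist_singleton] at hl
    rcases hl with rfl | rfl <;> simp [chainWeight, wdist_self]
  | @cons u u' v h p ih =>
    -- replacing the first vertex `u` of a tour by its neighbour `u'` costs at most `w s(u, u')`
    have key : ∀ l : List V, l.Sublist p.support →
        chainWeight (wdist G w) (u :: (l ++ [v])) ≤ w s(u, u') + (p.edges.map w).sum := by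
      intro l hl
      have h1 := ih l hl
      cases l with
      | nil =>
        have h2 := wdist_le_of_adj G hG w h v
        simp only [List.nil_append, chainWeight] at h1 ⊢
        omega
      | cons a l =>
        have h2 := wdist_le_of_adj G hG w h a
        simp only [List.cons_append, chainWeight] at h1 ⊢
        omega
    rw [SimpleGraph.Walk.support_cons, List.sublist_cons_iff] at hl
    simp only [SimpleGraph.Walk.edges_cons, List.map_cons, List.sum_cons]
    rcases hl with hl | ⟨r, rfl, hr⟩
    · exact key l hl
    · have := key r hr
      simp only [List.cons_append, chainWeight, wdist_self] at this ⊢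
      omega

theorem Nat.sInf_eq_of_forall_exists_le {A B : Set ℕ} (hAB : ∀ a ∈ A, ∃ b ∈ B, b ≤ a)
    (hBA : ∀ b ∈ B, ∃ a ∈ A, a ≤ b) : sInf A = sInf B := by
  rcases A.eq_empty_or_nonempty with rfl | hA
  · have : B = ∅ := by
      by_contra hB
      obtain ⟨b, hb⟩ := Set.nonempty_iff_ne_empty.2 hB
      simpa using hBA b hb
    rw [this]
  · obtain ⟨b₀, hb₀, -⟩ := hAB _ hA.some_mem
    apply le_antisymm
    · obtain ⟨a, ha, hle⟩ := hBA _ (Nat.sInf_mem ⟨b₀, hb₀⟩)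
      exact (Nat.sInf_le ha).trans hle
    · obtain ⟨b, hb, hle⟩ := hAB _ (Nat.sInf_mem hA)
      exact (Nat.sInf_le hb).trans hle

/-- The minimum weight of a VRP routing equals the minimum, over all partitions of the
client set `C` into at most `k` nonempty blocks, linear orderings of the blocks and
choices of a depot for each block, of the sum of the shortest-path tour weights. -/
theorem stmt3 {V : Type*} [Fintype V] [DecidableEq V]
    (G : SimpleGraph V) (hG : G.Connected) (w : Sym2 V → ℕ)
    (D C : Set V) (hD : D.Nonempty) (hC : C.Nonempty) (k : ℕ) (hk : 1 ≤ k) :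
    sInf {r : ℕ | ∃ k' ≤ k, ∃ (start : Fin k' → V)
        (p : (i : Fin k') → G.Walk (start i) (start i)),
        (∀ i, start i ∈ D) ∧
        (∀ c ∈ C, ∃ i, c ∈ (p i).support) ∧
        (∑ i, ((p i).edges.map w).sum) = r} =
    sInf {r : ℕ | ∃ Ls : List (V × List V),
        Ls.length ≤ k ∧
        (∀ pr ∈ Ls, pr.1 ∈ D ∧ pr.2 ≠ [] ∧ pr.2.Nodup) ∧
        (Ls.map Prod.snd).Pairwise (fun l₁ l₂ => ∀ x ∈ l₁, x ∉ l₂) ∧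
        (∀ x, x ∈ C ↔ ∃ pr ∈ Ls, x ∈ pr.2) ∧
        (Ls.map (fun pr => chainWeight (wdist G w) (pr.1 :: (pr.2 ++ [pr.1])))).sum = r} := by
  classical
  apply Nat.sInf_eq_of_forall_exists_le
  · rintro _ ⟨k', hk', start, p, hstart, hcov, rfl⟩
    -- `f c` is the index of a walk visiting `c`; `L i` lists the clients assigned to walk `i`
    obtain ⟨c₀, hc₀⟩ := hC
    have : Nonempty (Fin k') := ⟨(hcov c₀ hc₀).choose⟩
    choose! f hf using hcov
    let L : Fin k' → List V := fun i => (p i).support.dedup.filter (fun c => c ∈ C ∧ f c = i)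
    have hL : ∀ i x, x ∈ L i ↔ x ∈ C ∧ f x = i := by
      intro i x
      simp only [L, List.mem_filter, List.mem_dedup, decide_eq_true_eq]
      exact ⟨fun h => h.2, fun h => ⟨h.2 ▸ hf x h.1, h⟩⟩
    let I : List (Fin k') := (List.finRange k').filter (fun i => L i ≠ [])
    refine ⟨_, ⟨I.map (fun i => (start i, L i)), ?_, ?_, ?_, ?_, rfl⟩, ?_⟩
    · rw [List.length_map]
      exact ((List.length_filter_le _ _).trans_eq List.length_finRange).trans hk'
    · intro pr hpr
      obtain ⟨i, hi, rfl⟩ := List.mem_map.1 hpr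
      exact ⟨hstart i, by simpa [I] using hi, (List.nodup_dedup _).filter _⟩
    · rw [List.map_map, List.pairwise_map]
      refine ((List.nodup_finRange k').filter _).imp ?_
      intro i j hij x hx hx'
      exact hij (((hL i x).1 hx).2.symm.trans ((hL j x).1 hx').2)
    · intro x
      constructor
      · intro hx
        have hm : x ∈ L (f x) := (hL _ x).2 ⟨hx, rfl⟩
        refine ⟨(start (f x), L (f x)), List.mem_map.2 ⟨f x, ?_, rfl⟩, hm⟩
        simpa [I] using List.ne_nil_of_mem hm
      · rintro ⟨pr, hpr, hx⟩
        obtain ⟨i, -, rfl⟩ := List.mem_map.1 hpr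
        exact ((hL i x).1 hx).1
    · rw [List.map_map, ← List.sum_ofFn, List.ofFn_eq_map]
      refine le_trans (List.Sublist.sum_le_sum (List.filter_sublist.map _) (by simp)) ?_
      refine List.sum_le_sum fun i _ => ?_
      exact chainWeight_le_of_sublist G hG w (p i) (L i)
        (List.filter_sublist.trans (List.dedup_sublist _))
  · rintro _ ⟨Ls, hlen, hmem, -, hcov, rfl⟩
    choose q hq hs using fun i : Fin Ls.length =>
      exists_walk_chainWeight G hG w Ls[i].1 Ls[i].2 Ls[i].1
    refine ⟨_, ⟨Ls.length, hlen, fun i => Ls[i].1, q, fun i => (hmem _ (by simp)).1, ?_, rfl⟩, ?_⟩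
    · intro c hc
      obtain ⟨pr, hpr, hx⟩ := (hcov c).1 hc
      obtain ⟨i, hi, rfl⟩ := List.getElem_of_mem hpr
      exact ⟨⟨i, hi⟩, hs ⟨i, hi⟩ c hx⟩
    · simp only [hq]
      exact (Fin.sum_univ_fun_getElem Ls
        (fun pr => chainWeight (wdist G w) (pr.1 :: (pr.2 ++ [pr.1])))).le
end

section
/- Let G be a finite undirected simple graph with |V(G)| = 3q for some q ∈ ℕ. Then the following are equivalent: (i) V(G) can be partitioned into q sets of size 3, each of which induces a triangle (a subgraph isomorphic to K₃) in G; (ii) there exist k' ≤ q closed walks p₁, …, p_{k'} in G and a function A : V(G) → [k'] such that every vertex v lies on the walk p_{A(v)}, |A⁻¹(i)| ≤ 3 for every i ∈ [k'], and the total length Σᵢ length(pᵢ) is at most 3q. -/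
/-!
A closed walk through three distinct vertices has length at least `3`, and if its length is
exactly `3` then it traverses a triangle (`three_le_length`, `adj_of_length_eq_three`). Given
walks and an assignment as on the right-hand side, the `3 * q` vertices are distributed over at
most `q` classes of size at most `3`, so there are exactly `q` classes, all of size `3`. Hence
every walk has length at least `3`, and the budget `3 * q` forces every length to equal `3`, so
every class is a triangle. Conversely, each triangle of a packing is traversed by a closed walk
of length `3`.
-/

lemma three_le_length {V : Type*} [DecidableEq V] {G : SimpleGraph V} {u w : V}
    (p : G.Walk u w) (huw : u = w) (S : Finset V) (hS : S.card = 3)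
    (h : ∀ v ∈ S, v ∈ p.support) : 3 ≤ p.length := by
  -- Since `p` is closed, a support of at most three entries has at most two distinct ones.
  have key : ∀ a b : V, ¬ S ⊆ {a, b} := fun a b hab => by
    have := (Finset.card_le_card hab).trans Finset.card_le_two
    omega
  match p, huw, h with
  | .nil, _, h => exact absurd (fun v hv => by simpa using h v hv) (key u u)
  | .cons (v := v) _ .nil, _, h => exact absurd (fun x hx => by simpa using h x hx) (key u v)
  | .cons (v := v) _ (.cons _ .nil), huw, h =>
    refine absurd (fun x hx => ?_) (key u v)
    have := h x hx
    simp only [SimpleGraph.Walk.support_cons, SimpleGraph.Walk.support_nil, List.mem_cons,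
      List.not_mem_nil, or_false] at this
    simp only [Finset.mem_insert, Finset.mem_singleton]
    grind
  | .cons _ (.cons _ (.cons _ r)), _, _ => simp [SimpleGraph.Walk.length_cons]

lemma adj_of_length_eq_three {V : Type*} {G : SimpleGraph V} {u w : V}
    (p : G.Walk u w) (huw : u = w) (hp : p.length = 3) {a b : V}
    (ha : a ∈ p.support) (hb : b ∈ p.support) (hab : a ≠ b) : G.Adj a b := by
  match p, huw, hp, ha, hb with
  | .cons (v := v) h₁ (.cons (v := x) h₂ (.cons h₃ .nil)), huw, _, ha, hb =>
    subst huw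
    simp only [SimpleGraph.Walk.support_cons, SimpleGraph.Walk.support_nil, List.mem_cons,
      List.not_mem_nil, or_false] at ha hb
    have h₁' := h₁.symm
    have h₂' := h₂.symm
    have h₃' := h₃.symm
    grind
  | .cons _ (.cons _ (.cons _ (.cons _ r))), _, hp, _, _ =>
    simp [SimpleGraph.Walk.length_cons] at hp

/-- Triangle Packing is equivalent to the Load-Capacitated VRP instance with unit
weights and demands, every vertex a depot and a client, `k = q` vehicles, load
capacity `3`, and weight budget `3 * q`. -/
theorem stmt7 {V : Type*} [Fintype V] [DecidableEq V]
    (G : SimpleGraph V) (q : ℕ) (hcard : Fintype.card V = 3 * q) :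
    (∃ f : V → Fin q, ∀ i : Fin q,
      (Finset.univ.filter (fun v => f v = i)).card = 3 ∧
      (∀ a ∈ Finset.univ.filter (fun v => f v = i),
        ∀ b ∈ Finset.univ.filter (fun v => f v = i), a ≠ b → G.Adj a b))
    ↔
    (∃ k' ≤ q, ∃ (start : Fin k' → V)
        (p : (i : Fin k') → G.Walk (start i) (start i))
        (A : V → Fin k'),
      (∀ v : V, v ∈ (p (A v)).support) ∧
      (∀ i, (Finset.univ.filter (fun v => A v = i)).card ≤ 3) ∧
      (∑ i, (p i).length) ≤ 3 * q) := by
  constructor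
  · rintro ⟨f, hf⟩
    have hwalk : ∀ i : Fin q, ∃ (s : V) (p : G.Walk s s),
        p.length = 3 ∧ ∀ v, f v = i → v ∈ p.support := by
      intro i
      obtain ⟨hc, hadj⟩ := hf i
      obtain ⟨x, y, z, hxy, hxz, hyz, hS⟩ := Finset.card_eq_three.mp hc
      rw [hS] at hadj
      refine ⟨x, .cons (hadj x (by simp) y (by simp) hxy)
        (.cons (hadj y (by simp) z (by simp) hyz)
          (.cons (hadj z (by simp) x (by simp) hxz.symm) .nil)), by simp, ?_⟩
      intro v hv
      have hv' : v ∈ Finset.univ.filter (fun v => f v = i) := by simpa using hv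
      rw [hS] at hv'
      simp only [Finset.mem_insert, Finset.mem_singleton] at hv'
      rcases hv' with h | h | h <;> simp [h]
    choose s p hp hmem using hwalk
    refine ⟨q, le_rfl, s, p, f, fun v => hmem _ v rfl, fun i => (hf i).1.le, ?_⟩
    simp [hp, mul_comm]
  · rintro ⟨k, hk, s, p, A, hmem, hle, hsum⟩
    have hfib : ∑ i, (Finset.univ.filter (fun v => A v = i)).card = 3 * q := by
      rw [← hcard, ← Finset.card_univ]
      exact (Finset.card_eq_sum_card_fiberwise (fun v _ => Finset.mem_univ (A v))).symm
    have hub := Finset.sum_le_sum (fun i (_ : i ∈ Finset.univ) => hle i)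
    simp only [Finset.sum_const, Finset.card_univ, Fintype.card_fin, smul_eq_mul] at hub
    obtain rfl : k = q := by omega
    have hthree : ∀ i, (Finset.univ.filter (fun v => A v = i)).card = 3 := by
      have := (Finset.sum_eq_sum_iff_of_le (fun i (_ : i ∈ Finset.univ) => hle i)).mp
        (by rw [hfib]; simp [mul_comm])
      exact fun i => this i (Finset.mem_univ i)
    have hsupp : ∀ i, ∀ v ∈ Finset.univ.filter (fun v => A v = i), v ∈ (p i).support := by
      intro i v hv
      obtain rfl : A v = i := by simpa using hv
      exact hmem v
    have hlen : ∀ i, 3 ≤ (p i).length := fun i =>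
      three_le_length (p i) rfl _ (hthree i) (hsupp i)
    have hlen3 : ∀ i, 3 = (p i).length := by
      have hlb := Finset.sum_le_sum (fun i (_ : i ∈ Finset.univ) => hlen i)
      have hconst : ∑ _i : Fin k, 3 = 3 * k := by simp [mul_comm]
      have := (Finset.sum_eq_sum_iff_of_le (fun i (_ : i ∈ Finset.univ) => hlen i)).mp
        (by omega)
      exact fun i => this i (Finset.mem_univ i)
    exact ⟨A, fun i => ⟨hthree i, fun a ha b hb hab =>
      adj_of_length_eq_three (p i) rfl (hlen3 i).symm (hsupp i a ha) (hsupp i b hb) hab⟩⟩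
end

section
/- Let G be a finite undirected simple graph with |V(G)| = 3q for some q ∈ ℕ. Then the following are equivalent: (i) V(G) can be partitioned into q sets of size 3, each of which induces a triangle (a subgraph isomorphic to K₃) in G; (ii) there exist k' ≤ q closed walks p₁, …, p_{k'} in G, each of length at most 3, such that every vertex of G lies on at least one of the walks and the total length Σᵢ length(pᵢ) is at most 3q. -/
/-!
A triangle can be traversed by a closed walk of length `3`, which gives the forward direction.
Conversely, a closed walk of length at most `3` visits at most three distinct vertices, and if it
visits exactly three then it goes around a triangle (`clique_of_short_closed_walk`). Assign every
vertex to a walk containing it. The resulting `q` classes each have at most three elements, while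
their sizes add up to `3 * q`; hence every class has exactly three elements and is a triangle.
-/

/-- A set of vertices on a closed walk of length at most `3` has at most three elements, since the
starting vertex is listed twice in the support of a nontrivial closed walk. It can have three
elements only when the walk is a triangle. -/
theorem clique_of_short_closed_walk {V : Type*} [DecidableEq V] {G : SimpleGraph V} {u : V}
    (p : G.Walk u u) (hp : p.length ≤ 3) (S : Finset V) (hS : ∀ v ∈ S, v ∈ p.support) :
    S.card ≤ 3 ∧ (S.card = 3 → ∀ a ∈ S, ∀ b ∈ S, a ≠ b → G.Adj a b) := by
  match p, hp, hS with
  | .nil, _, hS =>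
    have hsub : S ⊆ {u} := fun v hv => by simpa using hS v hv
    have := Finset.card_le_card hsub
    rw [Finset.card_singleton] at this
    exact ⟨by omega, by omega⟩
  | .cons h .nil, _, _ => exact absurd h G.irrefl
  | .cons (v := v) h (.cons h' .nil), _, hS =>
    have hsub : S ⊆ {u, v} := fun x hx => by
      have := hS x hx
      simp at this ⊢
      tauto
    have := (Finset.card_le_card hsub).trans Finset.card_le_two
    exact ⟨by omega, by omega⟩
  | .cons (v := v) h (.cons (v := w) h' (.cons h'' .nil)), _, hS =>
    have hsub : ∀ x ∈ S, x = u ∨ x = v ∨ x = w := fun x hx => by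
      have := hS x hx
      simp at this
      tauto
    have hsub' : S ⊆ {u, v, w} := fun x hx => by simpa using hsub x hx
    refine ⟨(Finset.card_le_card hsub').trans Finset.card_le_three, fun _ a ha b hb hab => ?_⟩
    have h1 := h.symm
    have h2 := h'.symm
    have h3 := h''.symm
    rcases hsub a ha with rfl | rfl | rfl <;> rcases hsub b hb with rfl | rfl | rfl <;>
      first | assumption | exact absurd rfl hab
  | .cons _ (.cons _ (.cons _ (.cons _ _))), hp, _ =>
    simp only [SimpleGraph.Walk.length_cons] at hp
    omega

/-- Triangle Packing is equivalent to the Gas-Capacitated VRP instance with unit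
weights, every vertex a depot and a client, `k = q` vehicles, gas capacity `3`, and
weight budget `3 * q`. -/
theorem stmt8 {V : Type*} [Fintype V] [DecidableEq V]
    (G : SimpleGraph V) (q : ℕ) (hcard : Fintype.card V = 3 * q) :
    (∃ f : V → Fin q, ∀ i : Fin q,
      (Finset.univ.filter (fun v => f v = i)).card = 3 ∧
      (∀ a ∈ Finset.univ.filter (fun v => f v = i),
        ∀ b ∈ Finset.univ.filter (fun v => f v = i), a ≠ b → G.Adj a b))
    ↔
    (∃ k' ≤ q, ∃ (start : Fin k' → V)
        (p : (i : Fin k') → G.Walk (start i) (start i)),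
      (∀ i, (p i).length ≤ 3) ∧
      (∀ v : V, ∃ i, v ∈ (p i).support) ∧
      (∑ i, (p i).length) ≤ 3 * q) := by
  constructor
  · rintro ⟨f, hf⟩
    have key : ∀ i : Fin q, ∃ (s : V) (p : G.Walk s s),
        p.length = 3 ∧ ∀ v, f v = i → v ∈ p.support := by
      intro i
      obtain ⟨hc, hadj⟩ := hf i
      obtain ⟨a, b, c, hab, hac, hbc, hS⟩ := Finset.card_eq_three.1 hc
      rw [hS] at hadj
      have h1 : G.Adj a b := hadj a (by simp) b (by simp) hab
      have h2 : G.Adj b c := hadj b (by simp) c (by simp) hbc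
      have h3 : G.Adj c a := hadj c (by simp) a (by simp) hac.symm
      refine ⟨a, .cons h1 (.cons h2 (.cons h3 .nil)), by simp, fun v hv => ?_⟩
      have hv' : v ∈ ({a, b, c} : Finset V) := by rw [← hS]; simpa using hv
      simp at hv' ⊢
      tauto
    choose s p hp hsupp using key
    refine ⟨q, le_rfl, s, p, fun i => (hp i).le, fun v => ⟨f v, hsupp _ v rfl⟩, ?_⟩
    simp [hp, mul_comm]
  · rintro ⟨k', hk, s, p, hlen, hcov, -⟩
    choose g hg using hcov
    have key : ∀ i : Fin q,
        (Finset.univ.filter (fun v => Fin.castLE hk (g v) = i)).card ≤ 3 ∧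
        ((Finset.univ.filter (fun v => Fin.castLE hk (g v) = i)).card = 3 →
          ∀ a ∈ Finset.univ.filter (fun v => Fin.castLE hk (g v) = i),
          ∀ b ∈ Finset.univ.filter (fun v => Fin.castLE hk (g v) = i), a ≠ b → G.Adj a b) := by
      intro i
      -- Classes whose index is not that of a walk are empty.
      by_cases hi : ∃ j, Fin.castLE hk j = i
      · obtain ⟨j, rfl⟩ := hi
        refine clique_of_short_closed_walk (p j) (hlen j) _ fun v hv => ?_
        have : g v = j := Fin.castLE_injective hk (by simpa using hv)
        exact this ▸ hg v
      · have : Finset.univ.filter (fun v => Fin.castLE hk (g v) = i) = ∅ :=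
          Finset.filter_eq_empty_iff.2 fun v _ h => hi ⟨_, h⟩
        simp [this]
    have hsum : ∑ i : Fin q, (Finset.univ.filter (fun v => Fin.castLE hk (g v) = i)).card
        = ∑ _i : Fin q, 3 := by
      rw [← Finset.card_eq_sum_card_fiberwise (fun _ _ => Finset.mem_coe.2 (Finset.mem_univ _))]
      simp [hcard, mul_comm]
    have heq := (Finset.sum_eq_sum_iff_of_le fun i _ => (key i).1).1 hsum
    exact ⟨fun v => Fin.castLE hk (g v), fun i =>
      ⟨heq i (Finset.mem_univ i), (key i).2 (heq i (Finset.mem_univ i))⟩⟩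
end

section
/- Let U be a finite set, s : U → ℕ with s(u) ≥ 1, B ∈ ℕ with s(u) ≤ B for all u ∈ U, and k ∈ ℕ. Let T be the tree with vertex set {d} ∪ {v_u^i : u ∈ U, 1 ≤ i ≤ s(u)} and edge set {{d, v_u^1} : u ∈ U} ∪ {{v_u^i, v_u^{i+1}} : u ∈ U, 1 ≤ i < s(u)}, and set N = Σ_{u ∈ U} s(u) (so N = |E(T)|). Then the following are equivalent: (i) U can be partitioned into k sets U₁, …, U_k with Σ_{u ∈ U_j} s(u) ≤ B for every j ∈ [k]; (ii) there exist k' ≤ k closed walks p₁, …, p_{k'} in T, each starting at d, and a function A : {v_u^i} → [k'] such that every vertex v_u^i lies on the walk p_{A(v_u^i)}, |A⁻¹(j)| ≤ B for every j ∈ [k'], and the total length Σ_j length(p_j) is at most 2N. -/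
/-!
The clients on the path of item `u` form a chain hanging from the depot, so a walk from the depot
that reaches a client has passed through all clients above it. Reading a walk one edge at a time, a
newly visited client is always one step deeper than the current position; hence a walk between the
depot and a vertex at depth `h` that visits `m` clients has length at least `2 * m - h`
(`two_mul_card_visited_le`), and a closed walk has length at least `2 * m`.

Given a routing of total length at most `2 * N`, summing this bound shows that the walks visit at
most `N` clients in total, counted with multiplicity, while the `N` clients assigned to the walks
already account for that many. So each client is visited only by the walk it is assigned to. As the
walk serving a client of `u` also visits the first client of `u`, all clients of `u` are assigned to
the same walk, and packing `u` into the corresponding bin is feasible. Conversely, a bin containing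
a set `S` of items is served by going down and back each path of `S`, with length twice the total
size of `S` (`exists_tour`).
-/

/-- The tree obtained from a Bin Packing instance: a central depot `none` and, for each
item `u`, a pendant path of `s u` client vertices `some ⟨u, 0⟩, …, some ⟨u, s u - 1⟩`
(representing `v_u^1, …, v_u^{s(u)}`) attached to the depot. -/
def binTree {U : Type*} (s : U → ℕ) : SimpleGraph (Option (Σ u : U, Fin (s u))) :=
  SimpleGraph.fromRel (fun a b =>
    match a, b with
    | none, some x => (x.2 : ℕ) = 0
    | some x, some y => x.1 = y.1 ∧ (x.2 : ℕ) + 1 = (y.2 : ℕ)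
    | _, _ => False)

section BinTree

variable {U : Type*} {s : U → ℕ}

/-- The distance of a vertex of `binTree s` from the depot. -/
def binDepth : Option (Σ u : U, Fin (s u)) → ℕ
  | none => 0
  | some x => x.2 + 1

lemma binTree_adj_none_some {x : Σ u : U, Fin (s u)} :
    (binTree s).Adj none (some x) ↔ (x.2 : ℕ) = 0 := by
  simp [binTree]

lemma binTree_adj_some_some {x y : Σ u : U, Fin (s u)} :
    (binTree s).Adj (some x) (some y) ↔
      x.1 = y.1 ∧ ((x.2 : ℕ) + 1 = y.2 ∨ (y.2 : ℕ) + 1 = x.2) := by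
  simp only [binTree, SimpleGraph.fromRel_adj]
  constructor
  · rintro ⟨-, h | h⟩
    · exact ⟨h.1, Or.inl h.2⟩
    · exact ⟨h.1.symm, Or.inr h.2⟩
  · rintro ⟨h, h'⟩
    refine ⟨?_, ?_⟩
    · intro e
      cases e
      omega
    · rcases h' with h' | h'
      · exact Or.inl ⟨h, h'⟩
      · exact Or.inr ⟨h.symm, h'⟩

/-- A walk ending at the depot that visits a client also visits every client above it. -/
lemma mem_support_of_le {a b : Option (Σ u : U, Fin (s u))} (w : (binTree s).Walk a b)
    (hb : b = none) (u : U) (i j : Fin (s u)) (hji : j ≤ i)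
    (hi : some ⟨u, i⟩ ∈ w.support) : some ⟨u, j⟩ ∈ w.support := by
  induction w generalizing i with
  | nil => simp [hb] at hi
  | @cons a c b h w ih =>
    rw [SimpleGraph.Walk.support_cons, List.mem_cons] at hi ⊢
    rcases hi with rfl | hi
    · rcases eq_or_lt_of_le hji with rfl | hlt
      · exact Or.inl rfl
      right
      -- The next vertex is a neighbour of `⟨u, i⟩`, hence still at or below `⟨u, j⟩`.
      rcases c with _ | ⟨v, l⟩
      · have := binTree_adj_none_some.1 h.symm
        have : (j : ℕ) < i := hlt
        simp_all
      · obtain ⟨rfl, h'⟩ := binTree_adj_some_some.1 h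
        refine ih hb l ?_ w.start_mem_support
        have : (j : ℕ) < i := hlt
        rw [Fin.le_def]
        simp only at h'
        omega
    · exact Or.inr (ih hb i hji hi)

/-- The lower bound on the length of a walk: each visited client costs two edges, except that the
walk may save the way from the depot down to its starting vertex `a`. -/
lemma two_mul_card_visited_le [Fintype U] [DecidableEq U] {a b : Option (Σ u : U, Fin (s u))}
    (w : (binTree s).Walk a b) (hb : b = none) :
    2 * (Finset.univ.filter (fun x : Σ u : U, Fin (s u) => some x ∈ w.support)).card
      ≤ w.length + binDepth a := by
  induction w with
  | nil => simp [hb]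
  | @cons a c b h w ih =>
    have ih := ih hb
    rw [SimpleGraph.Walk.length_cons]
    have hdepth : binDepth c ≤ binDepth a + 1 := by
      rcases a with _ | a <;> rcases c with _ | c
      · simp
      · simp [binDepth, binTree_adj_none_some.1 h]
      · simp [binDepth]
      · have := binTree_adj_some_some.1 h
        simp only [binDepth]
        omega
    by_cases ha : a ∈ w.support ∨ a = none
    · have : (Finset.univ.filter (fun x : Σ u : U, Fin (s u) => some x ∈ (w.cons h).support))
          = Finset.univ.filter (fun x : Σ u : U, Fin (s u) => some x ∈ w.support) := by
        ext x
        simp only [SimpleGraph.Walk.support_cons, List.mem_cons, Finset.mem_filter,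
          Finset.mem_univ, true_and, or_iff_right_iff_imp]
        rintro rfl
        simpa using ha
      rw [this]
      omega
    · push Not at ha
      obtain ⟨ha, hne⟩ := ha
      rcases a with _ | ⟨u, i⟩
      · exact absurd rfl hne
      -- A new client is below `c`: the clients above `c` have already been visited.
      have hd : binDepth (some (⟨u, i⟩ : Σ u : U, Fin (s u))) = binDepth c + 1 := by
        rcases c with _ | ⟨v, l⟩
        · simpa [binDepth] using binTree_adj_none_some.1 h.symm
        · obtain ⟨rfl, h'⟩ := binTree_adj_some_some.1 h
          simp only at h'
          rcases h' with h' | h'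
          · refine absurd (mem_support_of_le w hb _ l i ?_ w.start_mem_support) ha
            rw [Fin.le_def]
            omega
          · simp only [binDepth]
            omega
      have : (Finset.univ.filter (fun x : Σ u : U, Fin (s u) => some x ∈ (w.cons h).support))
          ⊆ insert ⟨u, i⟩
            (Finset.univ.filter (fun x : Σ u : U, Fin (s u) => some x ∈ w.support)) := by
        intro x hx
        simpa using hx
      have := (Finset.card_le_card this).trans (Finset.card_insert_le _ _)
      omega

lemma exists_walk_down (u : U) (n : ℕ) (hn : n < s u) :
    ∃ w : (binTree s).Walk none (some ⟨u, ⟨n, hn⟩⟩), w.length = n + 1 ∧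
      ∀ i : Fin (s u), (i : ℕ) ≤ n → some ⟨u, i⟩ ∈ w.support := by
  induction n with
  | zero =>
    refine ⟨.cons (binTree_adj_none_some.2 rfl) .nil, by simp, fun i hi => ?_⟩
    have : i = ⟨0, hn⟩ := Fin.ext (by simpa using hi)
    simp [this]
  | succ n ih =>
    obtain ⟨w, hl, hw⟩ := ih (by omega)
    refine ⟨w.concat (binTree_adj_some_some.2 ⟨rfl, Or.inl rfl⟩), by simp [hl], fun i hi => ?_⟩
    rw [SimpleGraph.Walk.support_concat, List.mem_append]
    rcases Nat.lt_or_ge n i with h | h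
    · have : i = ⟨n + 1, hn⟩ := Fin.ext (by simp; omega)
      simp [this]
    · exact Or.inl (hw i h)

/-- The clients of the items in `S` can be visited by a closed walk from the depot whose length is
twice the total size of `S`. -/
lemma exists_tour [DecidableEq U] (hs : ∀ u, 1 ≤ s u) (S : Finset U) :
    ∃ w : (binTree s).Walk none none, w.length = 2 * ∑ u ∈ S, s u ∧
      ∀ x : Σ u : U, Fin (s u), x.1 ∈ S → some x ∈ w.support := by
  induction S using Finset.induction_on with
  | empty => exact ⟨.nil, by simp, by simp⟩
  | insert u S hu ih =>
    obtain ⟨w, hl, hw⟩ := ih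
    obtain ⟨v, hvl, hv⟩ := exists_walk_down (s := s) u (s u - 1) (by have := hs u; omega)
    refine ⟨(v.append v.reverse).append w, ?_, ?_⟩
    · have := hs u
      simp only [SimpleGraph.Walk.length_append, SimpleGraph.Walk.length_reverse, hvl, hl,
        Finset.sum_insert hu]
      omega
    · rintro ⟨t, i⟩ hx
      simp only [SimpleGraph.Walk.mem_support_append_iff]
      rcases Finset.mem_insert.1 hx with h | h
      · cases h
        exact Or.inl (Or.inl (hv i (by omega)))
      · exact Or.inr (hw _ h)

/-- The number of clients whose item lies in a given set of items is the total size of the set. -/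
lemma card_clients [Fintype U] (P : U → Prop) [DecidablePred P] :
    (Finset.univ.filter (fun x : Σ u : U, Fin (s u) => P x.1)).card
      = ∑ u ∈ Finset.univ.filter P, s u := by
  have : Finset.univ.filter (fun x : Σ u : U, Fin (s u) => P x.1)
      = (Finset.univ.filter P).sigma (fun _ => Finset.univ) := by
    ext x
    simp
  rw [this, Finset.card_sigma]
  simp

end BinTree

/-- Bin Packing is equivalent to the Load-Capacitated VRP instance on the tree
`binTree s` with unit weights and demands, the single depot `none`, load capacity `B`,
and weight budget `2 * |E(T)|`. -/
theorem stmt9 {U : Type*} [Fintype U] [DecidableEq U]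
    (s : U → ℕ) (hs : ∀ u, 1 ≤ s u) (B : ℕ) (hB : ∀ u, s u ≤ B) (k : ℕ) :
    (∃ f : U → Fin k, ∀ j : Fin k,
      (∑ u ∈ Finset.univ.filter (fun u => f u = j), s u) ≤ B)
    ↔
    (∃ k' ≤ k, ∃ (p : Fin k' → (binTree s).Walk none none)
        (A : (Σ u : U, Fin (s u)) → Fin k'),
      (∀ x : Σ u : U, Fin (s u), some x ∈ (p (A x)).support) ∧
      (∀ j : Fin k', (Finset.univ.filter (fun x : Σ u : U, Fin (s u) => A x = j)).card ≤ B) ∧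
      (∑ j, (p j).length) ≤ 2 * ∑ u, s u) := by
  constructor
  · rintro ⟨f, hf⟩
    choose p hpl hp using fun j : Fin k => exists_tour hs (Finset.univ.filter (fun u => f u = j))
    refine ⟨k, le_rfl, p, fun x => f x.1, fun x => hp _ x (by simp), fun j => ?_, ?_⟩
    · rw [card_clients (fun u => f u = j)]
      exact hf j
    · simp only [hpl]
      rw [← Finset.mul_sum, Finset.sum_fiberwise]
  · rintro ⟨k', hk, p, A, hA, hcap, hlen⟩
    have hsub : ∀ j, Finset.univ.filter (fun x => A x = j)
        ⊆ Finset.univ.filter (fun x => some x ∈ (p j).support) := by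
      intro j x hx
      simp only [Finset.mem_filter, Finset.mem_univ, true_and] at hx ⊢
      exact hx ▸ hA x
    have hfib : ∑ j, (Finset.univ.filter (fun x => A x = j)).card = ∑ u, s u := by
      rw [← Finset.card_eq_sum_card_fiberwise (fun x _ => by simp), Finset.card_univ]
      simp
    have hvis : ∑ j, (Finset.univ.filter (fun x => some x ∈ (p j).support)).card ≤ ∑ u, s u := by
      have : ∑ j, 2 * (Finset.univ.filter (fun x => some x ∈ (p j).support)).card
          ≤ ∑ j, (p j).length :=
        Finset.sum_le_sum fun j _ => two_mul_card_visited_le (p j) rfl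
      rw [← Finset.mul_sum] at this
      omega
    have heq := (Finset.sum_eq_sum_iff_of_le fun j (_ : j ∈ Finset.univ) =>
      Finset.card_le_card (hsub j)).1
      (le_antisymm (Finset.sum_le_sum fun j _ => Finset.card_le_card (hsub j))
        (hvis.trans hfib.ge))
    -- No client is visited by a walk other than the one serving it.
    have huniq : ∀ j x, some x ∈ (p j).support → A x = j := by
      intro j x hx
      have h := Finset.eq_of_subset_of_card_le (hsub j) (heq j (Finset.mem_univ j)).ge
      have : x ∈ Finset.univ.filter (fun x => A x = j) := by
        rw [h]
        simpa using hx
      simpa using this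
    have hconst : ∀ x : Σ u : U, Fin (s u), A ⟨x.1, ⟨0, hs x.1⟩⟩ = A x := fun x =>
      huniq _ _ (mem_support_of_le _ rfl x.1 x.2 _ (Fin.le_def.2 (Nat.zero_le _)) (hA x))
    refine ⟨fun u => Fin.castLE hk (A ⟨u, ⟨0, hs u⟩⟩), fun j => ?_⟩
    rw [← card_clients (fun u => Fin.castLE hk (A ⟨u, ⟨0, hs u⟩⟩) = j)]
    simp only [hconst]
    by_cases hj : ∃ i, Fin.castLE hk i = j
    · obtain ⟨i, rfl⟩ := hj
      simpa only [Fin.castLE_inj] using hcap i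
    · have : Finset.univ.filter (fun x => Fin.castLE hk (A x) = j) = ∅ :=
        Finset.filter_eq_empty_iff.2 fun x _ h => hj ⟨A x, h⟩
      simp [this]
end

section
/- Let U be a finite set, s : U → ℕ with s(u) ≥ 1, B ∈ ℕ with s(u) ≤ B for all u ∈ U, and k ∈ ℕ. Let T be the tree with vertex set {d} ∪ {v_u^i : u ∈ U, 1 ≤ i ≤ s(u)} and edge set {{d, v_u^1} : u ∈ U} ∪ {{v_u^i, v_u^{i+1}} : u ∈ U, 1 ≤ i < s(u)}, and set N = Σ_{u ∈ U} s(u) (so N = |E(T)|). Then the following are equivalent: (i) U can be partitioned into k sets U₁, …, U_k with Σ_{u ∈ U_j} s(u) ≤ B for every j ∈ [k]; (ii) there exist k' ≤ k closed walks p₁, …, p_{k'} in T, each starting at d and each of length at most 2B, such that every vertex v_u^i lies on at least one of the walks and the total length Σ_j length(p_j) is at most 2N. -/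
/-- The absolute difference `|a - b|`, written with truncated subtraction on `ℕ`. -/
def gap (a b : ℕ) : ℕ := (a - b) + (b - a)

/-- The height of a vertex in branch `u`: its distance from the depot if it lies in that branch,
and `0` if it is the depot or lies in another branch. -/
def height {U : Type*} [DecidableEq U] {s : U → ℕ} (u : U) : Option (Σ u : U, Fin (s u)) → ℕ
  | none => 0
  | some x => if x.1 = u then (x.2 : ℕ) + 1 else 0

theorem binTree_adj_root {U : Type*} {s : U → ℕ} (u : U) (h : 0 < s u) :
    (binTree s).Adj none (some ⟨u, ⟨0, h⟩⟩) := by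
  simp [binTree]

theorem binTree_adj_succ {U : Type*} {s : U → ℕ} (u : U) (n : ℕ) (h : n + 1 < s u) :
    (binTree s).Adj (some ⟨u, ⟨n, by omega⟩⟩) (some ⟨u, ⟨n + 1, h⟩⟩) := by
  simp [binTree]

theorem exists_walk_up {U : Type*} {s : U → ℕ} (u : U) (n : ℕ) (h : n < s u) :
    ∃ w : (binTree s).Walk none (some ⟨u, ⟨n, h⟩⟩), w.length = n + 1 ∧
      ∀ i : Fin (s u), (i : ℕ) ≤ n → some ⟨u, i⟩ ∈ w.support := by
  induction n with
  | zero =>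
    refine ⟨(binTree_adj_root u h).toWalk, by simp, fun i hi => ?_⟩
    have : i = ⟨0, h⟩ := Fin.ext (by simpa using hi)
    subst this
    simp
  | succ n ih =>
    obtain ⟨w, hw, hs⟩ := ih (by omega)
    refine ⟨w.concat (binTree_adj_succ u n h), by simp [hw], fun i hi => ?_⟩
    rw [SimpleGraph.Walk.support_concat]
    rcases Nat.lt_or_ge n i with h1 | h1
    · have : i = ⟨n + 1, h⟩ := Fin.ext (by simp; omega)
      subst this
      simp
    · simp [hs i h1]

/-- The closed walk serving one bin: it runs through the branches of the items in `S`, each to its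
end and back. -/
theorem exists_closed_walk {U : Type*} [DecidableEq U] {s : U → ℕ} (hs : ∀ u, 1 ≤ s u)
    (S : Finset U) :
    ∃ w : (binTree s).Walk none none, w.length = 2 * ∑ u ∈ S, s u ∧
      ∀ x : Σ u : U, Fin (s u), x.1 ∈ S → some x ∈ w.support := by
  induction S using Finset.induction_on with
  | empty => exact ⟨.nil, by simp, by simp⟩
  | insert u S hu ih =>
    obtain ⟨w, hw, hS⟩ := ih
    obtain ⟨v, hv, hi⟩ := exists_walk_up u (s u - 1) (Nat.sub_lt (hs u) one_pos)
    refine ⟨(v.append v.reverse).append w, ?_, ?_⟩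
    · have := hs u
      simp only [SimpleGraph.Walk.length_append, SimpleGraph.Walk.length_reverse, hv, hw,
        Finset.sum_insert hu]
      omega
    · rintro ⟨u', i⟩ hx
      simp only [SimpleGraph.Walk.mem_support_append_iff]
      rcases Finset.mem_insert.1 hx with h | h
      · have h' : u' = u := h
        subst h'
        exact Or.inl (Or.inl (hi i (by omega)))
      · exact Or.inr (hS _ h)

/-- Every edge lies in a single branch, where it joins consecutive heights. -/
theorem sum_gap_of_adj {U : Type*} [Fintype U] [DecidableEq U] {s : U → ℕ}
    {a b : Option (Σ u : U, Fin (s u))} (h : (binTree s).Adj a b) :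
    ∑ u, gap (height u a) (height u b) = 1 := by
  suffices ∃ v, ∀ u, gap (height u a) (height u b) = if v = u then 1 else 0 by
    obtain ⟨v, hv⟩ := this
    simp [hv]
  rw [binTree, SimpleGraph.fromRel_adj] at h
  obtain ⟨hne, h⟩ := h
  rcases a with _ | ⟨ua, ia⟩ <;> rcases b with _ | ⟨ub, ib⟩
  · exact absurd rfl hne
  · refine ⟨ub, fun u => ?_⟩
    simp only [or_false] at h
    simp only [height, gap, h]
    split_ifs <;> simp
  · refine ⟨ua, fun u => ?_⟩
    simp only [false_or] at h
    simp only [height, gap, h]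
    split_ifs <;> simp
  · refine ⟨ua, fun u => ?_⟩
    simp only at h
    have hu : ua = ub := by rcases h with h | h <;> simp [h.1]
    subst hu
    simp only [height, gap]
    split_ifs <;> omega

/-- `c u` is the number of steps of the walk in branch `u`; by the triangle inequality it is at
least the variation of height forced by any vertex `x` on the walk. -/
theorem exists_branch_costs {U : Type*} [Fintype U] [DecidableEq U] {s : U → ℕ}
    {a b : Option (Σ u : U, Fin (s u))} (w : (binTree s).Walk a b) :
    ∃ c : U → ℕ, ∑ u, c u = w.length ∧ ∀ x ∈ w.support, ∀ u,
      gap (height u a) (height u x) + gap (height u x) (height u b) ≤ c u := by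
  induction w with
  | nil => exact ⟨fun _ => 0, by simp, by simp [gap]⟩
  | @cons a a' b h w ih =>
    obtain ⟨c, hc, hx⟩ := ih
    refine ⟨fun u => gap (height u a) (height u a') + c u, ?_, ?_⟩
    · rw [Finset.sum_add_distrib, sum_gap_of_adj h, hc, SimpleGraph.Walk.length_cons, add_comm]
    · intro x hxs u
      rw [SimpleGraph.Walk.support_cons, List.mem_cons] at hxs
      rcases hxs with rfl | hxs
      · have := hx a' w.start_mem_support u
        simp only [gap] at *
        omega
      · have := hx x hxs u
        simp only [gap] at *
        omega

/-- Bin Packing is equivalent to the Gas-Capacitated VRP instance on the tree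
`binTree s` with unit weights, the single depot `none`, gas capacity `2 * B`, and
weight budget `2 * |E(T)|`. -/
theorem stmt10 {U : Type*} [Fintype U] [DecidableEq U]
    (s : U → ℕ) (hs : ∀ u, 1 ≤ s u) (B : ℕ) (hB : ∀ u, s u ≤ B) (k : ℕ) :
    (∃ f : U → Fin k, ∀ j : Fin k,
      (∑ u ∈ Finset.univ.filter (fun u => f u = j), s u) ≤ B)
    ↔
    (∃ k' ≤ k, ∃ p : Fin k' → (binTree s).Walk none none,
      (∀ j : Fin k', (p j).length ≤ 2 * B) ∧
      (∀ x : Σ u : U, Fin (s u), ∃ j, some x ∈ (p j).support) ∧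
      (∑ j, (p j).length) ≤ 2 * ∑ u, s u) := by
  constructor
  · rintro ⟨f, hf⟩
    choose w hw hv using fun j : Fin k =>
      exists_closed_walk hs (Finset.univ.filter (fun u => f u = j))
    refine ⟨k, le_rfl, w, fun j => ?_, fun x => ⟨f x.1, hv _ x (by simp)⟩, ?_⟩
    · rw [hw]
      exact Nat.mul_le_mul_left 2 (hf j)
    · simp only [hw]
      rw [← Finset.mul_sum, Finset.sum_fiberwise]
  · rintro ⟨k', hk, p, hp, hcov, -⟩
    choose c hc hx using fun j => exists_branch_costs (p j)
    choose f hf using fun u : U => hcov ⟨u, ⟨s u - 1, by have := hs u; omega⟩⟩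
    have hcost : ∀ u, 2 * s u ≤ c (f u) u := by
      intro u
      have h1 := hx (f u) _ (hf u) u
      have h2 := hs u
      simp only [height, gap, if_true] at h1
      omega
    refine ⟨fun u => Fin.castLE hk (f u), fun j => ?_⟩
    by_cases hj : (j : ℕ) < k'
    · have hfil : ∀ u ∈ Finset.univ.filter (fun u => Fin.castLE hk (f u) = j),
          2 * s u ≤ c ⟨j, hj⟩ u := by
        intro u hu
        have : f u = ⟨j, hj⟩ := Fin.ext (by simpa using congrArg Fin.val (Finset.mem_filter.1 hu).2)
        exact this ▸ hcost u
      have h1 := Finset.sum_le_sum hfil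
      have h2 : ∑ u ∈ Finset.univ.filter (fun u => Fin.castLE hk (f u) = j), c ⟨j, hj⟩ u
          ≤ ∑ u, c ⟨j, hj⟩ u :=
        Finset.sum_le_sum_of_subset (Finset.filter_subset _ _)
      rw [← Finset.mul_sum] at h1
      have h3 := hp ⟨j, hj⟩
      rw [hc] at h2
      show ∑ u ∈ Finset.univ.filter (fun u => Fin.castLE hk (f u) = j), s u ≤ B
      omega
    · -- Bins beyond the number of walks stay empty.
      rw [Finset.filter_false_of_mem]
      · simp
      · intro u _ h
        exact hj (by rw [← h]; exact (f u).2)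
end

section
/- Let m, b ∈ ℕ and let X, Y, Z ⊆ ℕ be pairwise disjoint finite sets with |X| = |Y| = |Z| = m and Σ_{a ∈ X ∪ Y ∪ Z} a = m · b. Let G be the star graph with center d and one leaf v_a for each a ∈ X ∪ Y ∪ Z, where the edge {d, v_a} has weight 64a + 1 if a ∈ X, weight 64a + 4 if a ∈ Y, and weight 64a + 16 if a ∈ Z; set g = 2(64b + 21). Then the following are equivalent: (i) X ∪ Y ∪ Z can be partitioned into m sets A₁, …, A_m, each containing exactly one element of each of X, Y and Z, such that Σ_{a ∈ A_i} a = b for every i ∈ [m]; (ii) there exist k' ≤ m closed walks p₁, …, p_{k'} in G, each starting at d, and a function A assigning each leaf v_a to a walk index in [k'] such that every leaf v_a lies on its assigned walk, at most 3 leaves are assigned to each walk, the weight of each walk is at most g, and the total weight of the walks is at most m · g. -/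
/-!
The weights of the leaves are `64 a + c`, where `c` is `1`, `4` or `16`. A closed walk from the
center of a star traverses the edge of every leaf it visits at least twice
(`two_mul_sum_le_weight`), and visiting a finite set of leaves one after the other attains this
bound (`exists_tour`). Hence a tour for a class of a matching has weight exactly
`2 * (64 b + 21)`.

Conversely, summing over all leaves gives the total `m * (64 b + 21)`. The at most `m` walks each
cover at most `64 b + 21` of it, so there are exactly `m` of them and each covers exactly
`64 b + 21`. Since a walk is assigned at most three leaves, the low-order parts `c` add up to at
most `48 < 64`, so no carry occurs: the values add up to `b` and the low-order parts to `21`.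
With at most three summands from `{1, 4, 16}`, the latter forces one of each.
-/

/-- The star obtained from a Numerical 3-Dimensional Matching instance: center (depot)
`none` and one leaf `some a` for every element `a` of `W = X ∪ Y ∪ Z`. -/
def ntdmStar (W : Finset ℕ) : SimpleGraph (Option ℕ) :=
  SimpleGraph.fromRel (fun a b =>
    match a, b with
    | none, some x => x ∈ W
    | _, _ => False)

/-- The edge weights of the NTDM star: the edge `{none, some a}` has weight
`64 a + 1` if `a ∈ X`, `64 a + 4` if `a ∈ Y`, and `64 a + 16` otherwise (i.e. for
`a ∈ Z`). -/
def ntdmWeight (X Y : Finset ℕ) : Sym2 (Option ℕ) → ℕ :=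
  Sym2.lift ⟨fun a b =>
    match a, b with
    | none, some x => 64 * x + (if x ∈ X then 1 else if x ∈ Y then 4 else 16)
    | some x, none => 64 * x + (if x ∈ X then 1 else if x ∈ Y then 4 else 16)
    | _, _ => 0,
    by intro a b; cases a <;> cases b <;> rfl⟩

/-- The weight `64 x + c` of the edge from the center to the leaf `some x`, as a function of the
element `x`. -/
def leafWeight (X Y : Finset ℕ) (x : ℕ) : ℕ :=
  64 * x + (if x ∈ X then 1 else if x ∈ Y then 4 else 16)

lemma ntdmStar_adj_none_some {W : Finset ℕ} {x : ℕ} :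
    (ntdmStar W).Adj none (some x) ↔ x ∈ W := by
  simp [ntdmStar]

lemma ntdmStar_not_adj_none_none {W : Finset ℕ} : ¬ (ntdmStar W).Adj none none := by
  simp [ntdmStar]

lemma ntdmStar_not_adj_some_some {W : Finset ℕ} {x y : ℕ} :
    ¬ (ntdmStar W).Adj (some x) (some y) := by
  simp [ntdmStar]

lemma ntdmWeight_none_some (X Y : Finset ℕ) (x : ℕ) :
    ntdmWeight X Y s(none, some x) = leafWeight X Y x := rfl

lemma ntdmWeight_some_none (X Y : Finset ℕ) (x : ℕ) :
    ntdmWeight X Y s(some x, none) = leafWeight X Y x := rfl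

/-- A walk ending at the center pays twice for every leaf it visits, except that the edge of its
starting vertex, if this is a leaf, may be used only once; the correction term `u.elim 0 _`
accounts for this exception and makes the induction on the walk go through. -/
lemma two_mul_sum_le_weight_add (W X Y : Finset ℕ) {u v : Option ℕ}
    (p : (ntdmStar W).Walk u v) (hv : v = none) (S : Finset ℕ)
    (hS : ∀ a ∈ S, some a ∈ p.support) :
    2 * ∑ a ∈ S, leafWeight X Y a
      ≤ (p.edges.map (ntdmWeight X Y)).sum + u.elim 0 (leafWeight X Y) := by
  induction p generalizing S with
  | nil =>
    subst hv
    have : S = ∅ := Finset.eq_empty_of_forall_notMem fun a ha => by simpa using hS a ha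
    simp [this]
  | @cons u w v h p ih =>
    rcases u with _ | x <;> rcases w with _ | y
    · exact absurd h ntdmStar_not_adj_none_none
    · have := ih hv S fun a ha => by simpa using hS a ha
      simp only [SimpleGraph.Walk.edges_cons, List.map_cons, List.sum_cons,
        ntdmWeight_none_some, Option.elim] at this ⊢
      omega
    · have := ih hv (S.erase x) fun a ha => by
        have h1 := hS a (Finset.mem_of_mem_erase ha)
        simpa [Finset.ne_of_mem_erase ha] using h1
      have h2 : ∑ a ∈ S, leafWeight X Y a
          ≤ ∑ a ∈ S.erase x, leafWeight X Y a + leafWeight X Y x := by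
        by_cases hx : x ∈ S
        · rw [Finset.sum_erase_add _ _ hx]
        · rw [Finset.erase_eq_of_notMem hx]
          omega
      simp only [SimpleGraph.Walk.edges_cons, List.map_cons, List.sum_cons,
        ntdmWeight_some_none, Option.elim] at this ⊢
      omega
    · exact absurd h ntdmStar_not_adj_some_some

lemma two_mul_sum_le_weight (W X Y : Finset ℕ) (p : (ntdmStar W).Walk none none)
    (S : Finset ℕ) (hS : ∀ a ∈ S, some a ∈ p.support) :
    2 * ∑ a ∈ S, leafWeight X Y a ≤ (p.edges.map (ntdmWeight X Y)).sum := by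
  simpa using two_mul_sum_le_weight_add W X Y p rfl S hS

/-- Visiting the leaves in `S` one by one, returning to the center after each, attains the bound
of `two_mul_sum_le_weight`. -/
lemma exists_tour_s11 (W X Y S : Finset ℕ) (hS : S ⊆ W) :
    ∃ p : (ntdmStar W).Walk none none, (∀ a ∈ S, some a ∈ p.support) ∧
      (p.edges.map (ntdmWeight X Y)).sum = 2 * ∑ a ∈ S, leafWeight X Y a := by
  induction S using Finset.induction_on with
  | empty => exact ⟨.nil, by simp, by simp⟩
  | insert x S hx ih =>
    obtain ⟨p, hp, hw⟩ := ih fun a ha => hS (Finset.mem_insert_of_mem ha)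
    have hadj := ntdmStar_adj_none_some.2 (hS (Finset.mem_insert_self x S))
    refine ⟨.cons hadj (.cons hadj.symm p), fun a ha => ?_, ?_⟩
    · rcases Finset.mem_insert.1 ha with rfl | ha
      · simp
      · simp [hp a ha]
    · simp only [SimpleGraph.Walk.edges_cons, List.map_cons, List.sum_cons,
        ntdmWeight_none_some, ntdmWeight_some_none, Finset.sum_insert hx, hw]
      ring

/-- The high-order part of the total weight records the values, the low-order part the origins. -/
lemma sum_leafWeight {X Y Z S : Finset ℕ} (hXY : Disjoint X Y) (hXZ : Disjoint X Z)
    (hYZ : Disjoint Y Z) (hS : S ⊆ X ∪ Y ∪ Z) :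
    ∑ a ∈ S, leafWeight X Y a
      = 64 * ∑ a ∈ S, a + ((S ∩ X).card + 4 * (S ∩ Y).card + 16 * (S ∩ Z).card) := by
  have key : ∀ a ∈ S, leafWeight X Y a = 64 * a + ((if a ∈ X then 1 else 0)
      + 4 * (if a ∈ Y then 1 else 0) + 16 * (if a ∈ Z then 1 else 0)) := by
    intro a ha
    have h := hS ha
    have h1 := fun h : a ∈ X => Finset.disjoint_left.1 hXY h
    have h2 := fun h : a ∈ X => Finset.disjoint_left.1 hXZ h
    have h3 := fun h : a ∈ Y => Finset.disjoint_left.1 hYZ h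
    simp only [Finset.mem_union] at h
    unfold leafWeight
    split_ifs <;> simp_all
  rw [Finset.sum_congr rfl key]
  simp only [Finset.sum_add_distrib, Finset.mul_sum, mul_ite, mul_one, mul_zero]
  simp [mul_comm]

lemma card_eq_add_inter {X Y Z S : Finset ℕ} (hXY : Disjoint X Y) (hXZ : Disjoint X Z)
    (hYZ : Disjoint Y Z) (hS : S ⊆ X ∪ Y ∪ Z) :
    S.card = (S ∩ X).card + (S ∩ Y).card + (S ∩ Z).card := by
  have h : S = (S ∩ X) ∪ (S ∩ Y) ∪ (S ∩ Z) := by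
    rw [← Finset.inter_union_distrib_left, ← Finset.inter_union_distrib_left,
      Finset.inter_eq_left.2 hS]
  conv_lhs => rw [h]
  rw [Finset.card_union_of_disjoint, Finset.card_union_of_disjoint]
  · exact hXY.mono Finset.inter_subset_right Finset.inter_subset_right
  · exact Finset.disjoint_union_left.2
      ⟨hXZ.mono Finset.inter_subset_right Finset.inter_subset_right,
        hYZ.mono Finset.inter_subset_right Finset.inter_subset_right⟩

/-- Numerical 3-Dimensional Matching is equivalent to the Load-and-Gas-Capacitated VRP
instance on the star `ntdmStar (X ∪ Y ∪ Z)` with unit demands, load capacity `3`, gas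
capacity `g = 2 * (64 * b + 21)`, `k = m` vehicles, and weight budget `m * g`. -/
theorem stmt11 (m b : ℕ) (X Y Z : Finset ℕ)
    (hXY : Disjoint X Y) (hXZ : Disjoint X Z) (hYZ : Disjoint Y Z)
    (hX : X.card = m) (hY : Y.card = m) (hZ : Z.card = m)
    (hsum : ∑ a ∈ X ∪ Y ∪ Z, a = m * b) :
    (∃ P : Fin m → Finset ℕ,
      (∀ i, (P i ∩ X).card = 1 ∧ (P i ∩ Y).card = 1 ∧ (P i ∩ Z).card = 1 ∧
        ∑ a ∈ P i, a = b) ∧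
      (∀ i j, i ≠ j → Disjoint (P i) (P j)) ∧
      (∀ a, a ∈ X ∪ Y ∪ Z ↔ ∃ i, a ∈ P i))
    ↔
    (∃ k' ≤ m, ∃ (p : Fin k' → (ntdmStar (X ∪ Y ∪ Z)).Walk none none)
        (A : {a // a ∈ X ∪ Y ∪ Z} → Fin k'),
      (∀ a : {a // a ∈ X ∪ Y ∪ Z}, some a.1 ∈ (p (A a)).support) ∧
      (∀ i, (Finset.univ.filter
        (fun a : {a // a ∈ X ∪ Y ∪ Z} => A a = i)).card ≤ 3) ∧
      (∀ i, ((p i).edges.map (ntdmWeight X Y)).sum ≤ 2 * (64 * b + 21)) ∧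
      (∑ i, ((p i).edges.map (ntdmWeight X Y)).sum) ≤ m * (2 * (64 * b + 21))) := by
  constructor
  · rintro ⟨P, hP, -, hcov⟩
    have hsub : ∀ i, P i ⊆ X ∪ Y ∪ Z := fun i a ha => (hcov a).2 ⟨i, ha⟩
    choose p hp hw using fun i => exists_tour_s11 (X ∪ Y ∪ Z) X Y (P i) (hsub i)
    choose A hA using fun a : {a // a ∈ X ∪ Y ∪ Z} => (hcov a.1).1 a.2
    have hg : ∀ i, ((p i).edges.map (ntdmWeight X Y)).sum = 2 * (64 * b + 21) := by
      intro i
      obtain ⟨h1, h2, h3, h4⟩ := hP i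
      rw [hw, sum_leafWeight hXY hXZ hYZ (hsub i), h1, h2, h3, h4]
    refine ⟨m, le_rfl, p, A, fun a => hp _ _ (hA a), fun i => ?_, fun i => (hg i).le, ?_⟩
    · have hc : (P i).card = 3 := by
        obtain ⟨h1, h2, h3, -⟩ := hP i
        rw [card_eq_add_inter hXY hXZ hYZ (hsub i), h1, h2, h3]
      rw [← hc]
      refine Finset.card_le_card_of_injOn Subtype.val (fun a ha => ?_)
        Subtype.val_injective.injOn
      have : A a = i := by simpa using ha
      exact this ▸ hA a
    · simp [hg]
  · rintro ⟨k, hk, p, A, hvis, hload, hgas, -⟩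
    -- `S i` is the set of elements whose leaves are assigned to the `i`-th walk.
    let S : Fin k → Finset ℕ := fun i =>
      (Finset.univ.filter fun a : {a // a ∈ X ∪ Y ∪ Z} => A a = i).map
        (Function.Embedding.subtype _)
    have hmem : ∀ i a, a ∈ S i ↔ ∃ h : a ∈ X ∪ Y ∪ Z, A ⟨a, h⟩ = i := by
      intro i a
      simp only [S, Finset.mem_map, Finset.mem_filter, Finset.mem_univ, true_and]
      constructor
      · rintro ⟨a, rfl, rfl⟩
        exact ⟨a.2, rfl⟩
      · rintro ⟨h, rfl⟩
        exact ⟨⟨a, h⟩, rfl, rfl⟩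
    have hsub : ∀ i, S i ⊆ X ∪ Y ∪ Z := fun i a ha => ((hmem i a).1 ha).1
    have hcard : ∀ i, (S i).card ≤ 3 := fun i => by simpa only [S, Finset.card_map] using hload i
    have hle : ∀ i, ∑ a ∈ S i, leafWeight X Y a ≤ 64 * b + 21 := by
      intro i
      have h := two_mul_sum_le_weight (X ∪ Y ∪ Z) X Y (p i) (S i) fun a ha => by
        obtain ⟨h, rfl⟩ := (hmem i a).1 ha
        exact hvis ⟨a, h⟩
      have := hgas i
      omega
    have htot : ∑ i, ∑ a ∈ S i, leafWeight X Y a = m * (64 * b + 21) := by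
      have h1 : ∑ i, ∑ a ∈ S i, leafWeight X Y a = ∑ a ∈ X ∪ Y ∪ Z, leafWeight X Y a := by
        simp only [S, Finset.sum_map, Function.Embedding.subtype_apply]
        rw [Finset.sum_fiberwise Finset.univ A fun a => leafWeight X Y a.1]
        exact Finset.sum_coe_sort (X ∪ Y ∪ Z) (leafWeight X Y)
      have hX' : (X ∪ Y ∪ Z) ∩ X = X := Finset.inter_eq_right.2 fun a ha => by simp [ha]
      have hY' : (X ∪ Y ∪ Z) ∩ Y = Y := Finset.inter_eq_right.2 fun a ha => by simp [ha]
      have hZ' : (X ∪ Y ∪ Z) ∩ Z = Z := Finset.inter_eq_right.2 fun a ha => by simp [ha]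
      rw [h1, sum_leafWeight hXY hXZ hYZ subset_rfl, hsum, hX', hY', hZ', hX, hY, hZ]
      ring
    have hub : ∑ i, ∑ a ∈ S i, leafWeight X Y a ≤ ∑ _i : Fin k, (64 * b + 21) :=
      Finset.sum_le_sum fun i _ => hle i
    obtain rfl : k = m := by
      refine le_antisymm hk (Nat.le_of_mul_le_mul_right (c := 64 * b + 21) ?_ (by omega))
      simpa [htot] using hub
    have heq : ∀ i, ∑ a ∈ S i, leafWeight X Y a = 64 * b + 21 := by
      have := (Finset.sum_eq_sum_iff_of_le fun i (_ : i ∈ Finset.univ) => hle i).1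
        (by simp [htot])
      exact fun i => this i (Finset.mem_univ i)
    refine ⟨S, fun i => ?_, fun i j hij => ?_, fun a => ?_⟩
    · have h1 := heq i
      have h2 := hcard i
      rw [sum_leafWeight hXY hXZ hYZ (hsub i)] at h1
      rw [card_eq_add_inter hXY hXZ hYZ (hsub i)] at h2
      -- The low-order part is at most `16 * 3 < 64`, and `21 = 1 + 4 + 16` is the only way to
      -- write `21` as a sum of at most three numbers from `{1, 4, 16}`.
      omega
    · refine Finset.disjoint_left.2 fun a hi hj => hij ?_
      obtain ⟨_, rfl⟩ := (hmem i a).1 hi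
      exact ((hmem j a).1 hj).2
    · exact ⟨fun h => ⟨A ⟨a, h⟩, (hmem _ _).2 ⟨h, rfl⟩⟩, fun ⟨i, h⟩ => hsub i h⟩
end

section
/- Let (G, w) be a finite undirected simple graph with edge weights w : E(G) → ℕ, let v ∈ V(G), and let p be a closed walk in G starting and ending at v. If some edge e of G occurs at least 3 times in the edge list of p (counted with multiplicity), then there exists a closed walk p' in G starting and ending at v such that the set of vertices visited by p' equals the set of vertices visited by p, and the multiset of edges of p' equals the multiset of edges of p with exactly two copies of e removed; in particular w(p') = w(p) − 2·w(e) and p' visits the same clients as p. -/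
/-!
Among three traversals of an edge, two go in the same direction, say along the dart `d = (x, y)`.
Then `p = A · d · B · d · C` with `B` a walk from `y` to `x`, and `A · B⁻¹ · C`, where `B⁻¹` is the
reversal of `B`, is a walk with the same endpoints. It omits exactly two copies of `e`, and it still
visits every vertex of `p`, since `x` and `y` are the endpoints of `B`.
-/

/-- Each traversal of an edge is along one of its two darts. -/
theorem count_edge_le {V : Type*} [DecidableEq V] {G : SimpleGraph V} (d : G.Dart)
    (l : List G.Dart) :
    (l.map SimpleGraph.Dart.edge).count d.edge ≤ l.count d + l.count d.symm := by
  induction l with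
  | nil => simp
  | cons a l ih =>
    simp only [List.map_cons, List.count_cons, beq_iff_eq, SimpleGraph.dart_edge_eq_iff]
    split_ifs <;> first | omega | simp_all

theorem exists_split_of_mem_darts {V : Type*} {G : SimpleGraph V} {u v : V} (p : G.Walk u v)
    (d : G.Dart) (hd : d ∈ p.darts) :
    ∃ (A : G.Walk u d.fst) (B : G.Walk d.snd v), p = A.append (.cons d.adj B) := by
  induction p with
  | nil => simp at hd
  | cons h q ih =>
    rw [SimpleGraph.Walk.darts_cons, List.mem_cons] at hd
    rcases hd with rfl | hd
    · exact ⟨.nil, q, rfl⟩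
    · obtain ⟨A, B, rfl⟩ := ih hd
      exact ⟨.cons h A, B, rfl⟩

theorem exists_split_of_two_le_count_darts {V : Type*} [DecidableEq V] {G : SimpleGraph V}
    {u v : V} (p : G.Walk u v) (d : G.Dart) (hd : 2 ≤ p.darts.count d) :
    ∃ (A : G.Walk u d.fst) (B : G.Walk d.snd d.fst) (C : G.Walk d.snd v),
      p = A.append (.cons d.adj (B.append (.cons d.adj C))) := by
  induction p with
  | nil => simp at hd
  | cons h q ih =>
    rw [SimpleGraph.Walk.darts_cons, List.count_cons] at hd
    split_ifs at hd with hc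
    · have hq : d ∈ q.darts := List.count_pos_iff.mp (by omega)
      rw [beq_iff_eq] at hc
      subst hc
      obtain ⟨B, C, rfl⟩ := exists_split_of_mem_darts q _ hq
      exact ⟨.nil, B, C, rfl⟩
    · obtain ⟨A, B, C, rfl⟩ := ih hd
      exact ⟨.cons h A, B, C, rfl⟩

/-- If an edge `e` occurs at least three times (with multiplicity) in a closed walk `p`
based at `v`, then there is a closed walk `p'` based at `v` visiting exactly the same
vertices whose edge multiset is that of `p` with exactly two copies of `e` removed; in
particular its weight is `w(p) - 2 * w(e)`. -/
theorem stmt13 {V : Type*} [Fintype V] [DecidableEq V]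
    (G : SimpleGraph V) (w : Sym2 V → ℕ) (v : V) (p : G.Walk v v)
    (e : Sym2 V) (he : 3 ≤ p.edges.count e) :
    ∃ p' : G.Walk v v,
      (∀ x, x ∈ p'.support ↔ x ∈ p.support) ∧
      (↑p'.edges : Multiset (Sym2 V)) = (↑p.edges : Multiset (Sym2 V)) - Multiset.replicate 2 e ∧
      (p'.edges.map w).sum + 2 * w e = (p.edges.map w).sum := by
  obtain ⟨d, hde, hd⟩ : ∃ d : G.Dart, d.edge = e ∧ 2 ≤ p.darts.count d := by
    have hmem : e ∈ p.edges := List.count_pos_iff.mp (by omega)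
    obtain ⟨d, -, rfl⟩ := List.mem_map.mp hmem
    have h := count_edge_le d p.darts
    change 3 ≤ (p.darts.map SimpleGraph.Dart.edge).count d.edge at he
    by_cases h2 : 2 ≤ p.darts.count d
    · exact ⟨d, rfl, h2⟩
    · exact ⟨d.symm, d.edge_symm, by omega⟩
  obtain ⟨A, B, C, rfl⟩ := exists_split_of_two_le_count_darts p d hd
  have hxy : s(d.fst, d.snd) = e := hde
  refine ⟨A.append (B.reverse.append C), fun x => ?_, ?_, ?_⟩
  · have hx : d.fst ∈ B.support := B.end_mem_support
    simp only [SimpleGraph.Walk.mem_support_append_iff, SimpleGraph.Walk.support_reverse,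
      List.mem_reverse, SimpleGraph.Walk.support_cons, List.mem_cons]
    grind
  · refine eq_tsub_of_add_eq ?_
    simp only [SimpleGraph.Walk.edges_append, SimpleGraph.Walk.edges_reverse,
      SimpleGraph.Walk.edges_cons, hxy, ← Multiset.coe_replicate, Multiset.coe_add,
      Multiset.coe_eq_coe, List.perm_iff_count]
    intro a
    simp only [List.count_append, List.count_reverse, List.count_cons, List.replicate,
      List.count_nil]
    omega
  · simp only [SimpleGraph.Walk.edges_append, SimpleGraph.Walk.edges_reverse,
      SimpleGraph.Walk.edges_cons, hxy, List.map_append, List.map_reverse, List.map_cons,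
      List.sum_append, List.sum_reverse, List.sum_cons]
    omega
end
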